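/- Let G be a symmetric directed graph on m vertices with d ordered arcs, each arc (j,i) carrying a real matrix C_{ji} with n columns, and let G_1, G_2, …, G_p be symmetric spanning subgraphs of G whose union is G. Let J be the incidence matrix of G, J_i the spanning incidence matrix of G_i and W_i the spanning weight matrix of G_i, and set J̄ = J ⊗ I_n, J̄_i = J_i ⊗ I_n, W̄_i = W_i ⊗ I_n. Then kernel(C J̄ᵀ) = kernel(C ∑_{i=1}^p W̄_i^{1/2} J̄_iᵀ). -/

import Mathlib

open Matrix

open Matrix

/-- Incidence matrix of the directed graph on `Fin m` whose `k`-th arc is `(src k, dst k)`: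
column `k` has a `1` in row `dst k` and a `-1` in row `src k`. -/
def incMat (m d : ℕ) (src dst : Fin d → Fin m) : Matrix (Fin m) (Fin d) ℝ :=
  Matrix.of fun i k => (if dst k = i then (1 : ℝ) else 0) - (if src k = i then (1 : ℝ) else 0)

/-- Block-diagonal matrix whose `k`-th diagonal block is the arc matrix `Cm k`. -/
def blockC {d n : ℕ} {r : Fin d → ℕ} (Cm : (k : Fin d) → Matrix (Fin (r k)) (Fin n) ℝ) :
    Matrix ((k : Fin d) × Fin (r k)) (Fin d × Fin n) ℝ :=
  Matrix.of fun p q => if p.1 = q.1 then Cm p.1 p.2 q.2 else 0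

/-- Kronecker product `M ⊗ Iₙ`. -/
def kronI (n : ℕ) {a b : ℕ} (M : Matrix (Fin a) (Fin b) ℝ) :
    Matrix (Fin a × Fin n) (Fin b × Fin n) ℝ :=
  Matrix.kroneckerMap (· * ·) M (1 : Matrix (Fin n) (Fin n) ℝ)

/-- `span Ī`: the consensus subspace of stacked vectors whose `m` blocks in `ℝⁿ` coincide,
i.e. the column span of `Ī = 1ₘ ⊗ Iₙ`. -/
def consensusSub (m n : ℕ) : Submodule ℝ (Fin m × Fin n → ℝ) :=
  LinearMap.range (LinearMap.funLeft ℝ ℝ (Prod.snd : Fin m × Fin n → Fin n))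

/-- Weak connectivity of the digraph with arcs `(src k, dst k)`. -/
def WeaklyConnected (m d : ℕ) (src dst : Fin d → Fin m) : Prop :=
  ∀ u v : Fin m, Relation.ReflTransGen
    (fun a b => (∃ k, src k = a ∧ dst k = b) ∨ (∃ k, src k = b ∧ dst k = a)) u v

/-- Number of neighbors of vertex `i` in the (symmetric) subgraph of arcs `S`. -/
noncomputable def nbrDeg (m d : ℕ) (src dst : Fin d → Fin m) (S : Finset (Fin d)) (i : Fin m) : ℕ :=
  Set.ncard {j : Fin m | ∃ k ∈ S, src k = i ∧ dst k = j}

/-- Metropolis weight of the arc `k = (j, i)` of the subgraph with arc set `S`: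
`1 / (1 + max (deg j) (deg i))`. -/
noncomputable def metroW (m d : ℕ) (src dst : Fin d → Fin m) (S : Finset (Fin d)) (k : Fin d) : ℝ :=
  1 / (1 + (max (nbrDeg m d src dst S (src k)) (nbrDeg m d src dst S (dst k)) : ℝ))

/-- Diagonal entries of the spanning weight matrix of the subgraph with arc set `S`:
the Metropolis weight on arcs of `S`, and `0` elsewhere. -/
noncomputable def spanWvec (m d : ℕ) (src dst : Fin d → Fin m) (S : Finset (Fin d)) (k : Fin d) : ℝ :=
  if k ∈ S then metroW m d src dst S k else 0

/-- Spanning incidence matrix of the spanning subgraph with arc set `S`: the columns of the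
incidence matrix on arcs of `S`, and zero columns elsewhere. -/
def spanIncMat (m d : ℕ) (src dst : Fin d → Fin m) (S : Finset (Fin d)) :
    Matrix (Fin m) (Fin d) ℝ :=
  Matrix.of fun i k => if k ∈ S then incMat m d src dst i k else 0

/-!
The block of `J̄ᵢᵀ` at arc `k` is that of `J̄ᵀ` when `k` lies in `Gᵢ` and zero otherwise, so
`∑ᵢ W̄ᵢ^{1/2} J̄ᵢᵀ = D J̄ᵀ` with `D` diagonal, scaling the block of arc `k` by the sum of the square
roots of its weights in the subgraphs containing it. This sum is positive because the subgraphs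
cover `G`. As `D` is constant on blocks it can be moved to the left of the block-diagonal matrix
`C`, and an invertible diagonal factor on the left does not change the kernel.
-/

theorem ker_mulVecLin_diagonal_mul {ι κ R : Type*} [Fintype ι] [DecidableEq ι] [Fintype κ]
    [CommSemiring R] [NoZeroDivisors R] {s : ι → R} (hs : ∀ i, s i ≠ 0) (M : Matrix ι κ R) :
    LinearMap.ker (diagonal s * M).mulVecLin = LinearMap.ker M.mulVecLin := by
  ext x
  simp only [LinearMap.mem_ker, mulVecLin_apply, ← mulVec_mulVec, funext_iff, mulVec_diagonal,
    Pi.zero_apply, mul_eq_zero, hs, false_or]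

section Kronecker

variable {n a b c : ℕ}

theorem kronI_transpose (M : Matrix (Fin a) (Fin b) ℝ) : (kronI n M)ᵀ = kronI n Mᵀ := by
  rw [kronI, kronI, ← kroneckerMap_transpose, transpose_one]

theorem kronI_mul (M : Matrix (Fin a) (Fin b) ℝ) (N : Matrix (Fin b) (Fin c) ℝ) :
    kronI n (M * N) = kronI n M * kronI n N := by
  simpa only [kronI, Matrix.mul_one] using
    mul_kronecker_mul M N (1 : Matrix (Fin n) (Fin n) ℝ) (1 : Matrix (Fin n) (Fin n) ℝ)

theorem kronI_sum {ι : Type*} (s : Finset ι) (M : ι → Matrix (Fin a) (Fin b) ℝ) :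
    kronI n (∑ i ∈ s, M i) = ∑ i ∈ s, kronI n (M i) := by
  ext
  simp [kronI, Matrix.sum_apply, Finset.sum_mul]

theorem kronI_diagonal (v : Fin a → ℝ) : kronI n (diagonal v) = diagonal fun q => v q.1 := by
  simpa only [kronI, diagonal_one, mul_one] using
    diagonal_kronecker_diagonal v fun _ : Fin n => (1 : ℝ)

end Kronecker

section BlockDiagonal

variable {d n : ℕ} {r : Fin d → ℕ}

theorem blockC_mul_kronI_diagonal (Cm : (k : Fin d) → Matrix (Fin (r k)) (Fin n) ℝ)
    (s : Fin d → ℝ) :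
    blockC Cm * kronI n (diagonal s) =
      diagonal (fun z : (k : Fin d) × Fin (r k) => s z.1) * blockC Cm := by
  ext z q
  rw [kronI_diagonal, mul_diagonal, diagonal_mul]
  by_cases h : z.1 = q.1
  · rw [h, mul_comm]
  · simp [blockC, h]

theorem ker_mulVecLin_blockC_mul_kronI_diagonal_mul {κ : Type*} [Fintype κ]
    (Cm : (k : Fin d) → Matrix (Fin (r k)) (Fin n) ℝ) {s : Fin d → ℝ} (hs : ∀ k, s k ≠ 0)
    (X : Matrix (Fin d × Fin n) κ ℝ) :
    LinearMap.ker (blockC Cm * (kronI n (diagonal s) * X)).mulVecLin =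
      LinearMap.ker (blockC Cm * X).mulVecLin := by
  rw [← Matrix.mul_assoc, blockC_mul_kronI_diagonal, Matrix.mul_assoc,
    ker_mulVecLin_diagonal_mul fun z : (k : Fin d) × Fin (r k) => hs z.1]

end BlockDiagonal

section SpanningSubgraphs

variable {m d : ℕ} {src dst : Fin d → Fin m}

theorem spanWvec_pos (S : Finset (Fin d)) {k : Fin d} (hk : k ∈ S) :
    0 < spanWvec m d src dst S k := by
  rw [spanWvec, if_pos hk, metroW]
  positivity

theorem sum_diagonal_mul_spanIncMat_transpose {ι : Type*} [Fintype ι] (S : ι → Finset (Fin d))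
    (v : ι → Fin d → ℝ) :
    ∑ i, diagonal (v i) * (spanIncMat m d src dst (S i))ᵀ =
      diagonal (fun k => ∑ i with k ∈ S i, v i k) * (incMat m d src dst)ᵀ := by
  ext k u
  simp [Matrix.sum_apply, spanIncMat, Finset.sum_filter, Finset.sum_mul]

theorem sum_kronI_diagonal_mul_kronI_spanIncMat_transpose (n : ℕ) {ι : Type*} [Fintype ι]
    (S : ι → Finset (Fin d)) (v : ι → Fin d → ℝ) :
    ∑ i, kronI n (diagonal (v i)) * (kronI n (spanIncMat m d src dst (S i)))ᵀ =
      kronI n (diagonal fun k => ∑ i with k ∈ S i, v i k) * (kronI n (incMat m d src dst))ᵀ := by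
  simp only [kronI_transpose, ← kronI_mul, ← kronI_sum, sum_diagonal_mul_spanIncMat_transpose]

theorem stmt_12_general {n : ℕ} {ι : Type*} [Fintype ι] {r : Fin d → ℕ}
    (Cm : (k : Fin d) → Matrix (Fin (r k)) (Fin n) ℝ) (S : ι → Finset (Fin d))
    (w : ι → Fin d → ℝ) (hw : ∀ i, ∀ k ∈ S i, 0 < w i k) (hunion : ∀ k, ∃ i, k ∈ S i) :
    LinearMap.ker (blockC Cm * (kronI n (incMat m d src dst))ᵀ).mulVecLin =
    LinearMap.ker (blockC Cm * ∑ i, kronI n (diagonal fun k => √(w i k))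
        * (kronI n (spanIncMat m d src dst (S i)))ᵀ).mulVecLin := by
  have sum_ne_zero (k : Fin d) : ∑ i with k ∈ S i, √(w i k) ≠ 0 := by
    obtain ⟨i, hi⟩ := hunion k
    refine (Finset.sum_pos (fun j hj => ?_) ⟨i, by simpa using hi⟩).ne'
    exact Real.sqrt_pos.2 (hw j k (by simpa using hj))
  rw [sum_kronI_diagonal_mul_kronI_spanIncMat_transpose n S fun i k => √(w i k),
    ker_mulVecLin_blockC_mul_kronI_diagonal_mul Cm sum_ne_zero]

end SpanningSubgraphs

/-- For a symmetric digraph `G` (arcs `(src k, dst k)`, matrix `Cm k` on arc `k`)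
and symmetric spanning subgraphs `G_1, …, G_p` (arc sets `S i`) whose union is `G`, one has
`ker (C J̄ᵀ) = ker (C ∑ᵢ W̄ᵢ^{1/2} J̄ᵢᵀ)`, where `Jᵢ, Wᵢ` are the spanning incidence and
spanning (Metropolis) weight matrices of `G_i`. -/
theorem stmt_12 (m n d p : ℕ) (src dst : Fin d → Fin m)
    (hself : ∀ k, src k ≠ dst k) (hinj : Function.Injective fun k => (src k, dst k))
    (hsymG : ∀ k : Fin d, ∃ k' : Fin d, src k' = dst k ∧ dst k' = src k)
    (r : Fin d → ℕ) (Cm : (k : Fin d) → Matrix (Fin (r k)) (Fin n) ℝ)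
    (S : Fin p → Finset (Fin d))
    (hsymS : ∀ i, ∀ k ∈ S i, ∃ k' ∈ S i, src k' = dst k ∧ dst k' = src k)
    (hunion : ∀ k : Fin d, ∃ i : Fin p, k ∈ S i) :
    LinearMap.ker (blockC Cm * (kronI n (incMat m d src dst))ᵀ).mulVecLin =
    LinearMap.ker (blockC Cm * ∑ i : Fin p,
        kronI n (Matrix.diagonal fun k => Real.sqrt (spanWvec m d src dst (S i) k))
          * (kronI n (spanIncMat m d src dst (S i)))ᵀ).mulVecLin :=
  stmt_12_general Cm S (fun i => spanWvec m d src dst (S i)) (fun i _ => spanWvec_pos (S i)) hunion
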